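/- For the Euler totient function φ, ∑_{n ≤ x} φ(⌊x/n⌋)/⌊x/n⌋ = x · ∑_{m ≥ 1} φ(m)/(m²(m+1)) + O(x^{1/3} log x) as x → ∞. -/

import Mathlib

open Filter Finset

/-!
Since `φ(m)/m = ∑_{d ∣ m} μ(d)/d`, the sum equals `∑_d μ(d)/d · #{n ≤ x : d ∣ ⌊x/n⌋}`. It suffices
to count with error `O((x/d)^{1/3} log x)`, because `∑_d |μ(d)/d| d^{-1/3}` converges.

By the hyperbola method at `√(x/d)`, this count is its main term plus four sums of the sawtooth
function `ψ(t) = {t} - 1/2`: for small `n` the indicator of `d ∣ ⌊x/n⌋` is itself a difference of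
sawtooth values, and for large `n` one counts, for each small `l`, the interval where
`⌊x/n⌋ = d l`. All four are sums of `ψ(y/(l + θ) + c)` over `l ≤ √y`, with `y = x/d`.

On a dyadic block `ψ` is trapped between difference quotients of the periodic Bernoulli function
`B₂`, whose Fourier series converges absolutely. The resulting exponential sums are bounded by van
der Corput's second derivative test, so that each block contributes `O(y^{1/3})`.
-/

open scoped FourierTransform Real fwdDiff

section ExponentialSums

variable {f : ℕ → ℝ} {a b : ℕ}

theorem norm_sum_Ico_smul_fwdDiff_le {E : Type*} [NormedAddCommGroup E] [NormedSpace ℝ E]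
    {c : ℕ → ℝ} {s : ℕ → E} {M R : ℝ} (hM : 0 ≤ M) (hanti : AntitoneOn c (Set.Ico a b))
    (hc : ∀ n ∈ Set.Ico a b, |c n| ≤ M) (hs : ∀ n, ‖s n‖ ≤ R) :
    ‖∑ n ∈ Ico a b, c n • Δ_[1] s n‖ ≤ 4 * M * R := by
  have hR : 0 ≤ R := (norm_nonneg _).trans (hs 0)
  rcases le_or_gt b a with hba | hab
  · rw [Ico_eq_empty_of_le hba, sum_empty, norm_zero]
    positivity
  obtain ⟨k, hak, rfl⟩ : ∃ k, a ≤ k ∧ b = k + 1 := ⟨b - 1, by omega, by omega⟩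
  have by_parts : ∑ n ∈ Ico a (k + 1), c n • Δ_[1] s n =
      c k • s (k + 1) - c a • s a + ∑ n ∈ Ico a k, (c n - c (n + 1)) • s (n + 1) := by
    clear hanti hc hab
    induction k, hak using Nat.le_induction with
    | base => simp [fwdDiff, smul_sub]
    | succ k hak ih =>
      rw [sum_Ico_succ_top (by omega), ih, sum_Ico_succ_top hak, fwdDiff]
      module
  have norm_smul_le_of_mem : ∀ n ∈ Set.Ico a (k + 1), ∀ m, ‖c n • s m‖ ≤ M * R := fun n hn m => by
    rw [norm_smul]
    exact mul_le_mul (hc n hn) (hs m) (norm_nonneg _) hM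
  have variation : ‖∑ n ∈ Ico a k, (c n - c (n + 1)) • s (n + 1)‖ ≤ (c a - c k) * R := by
    rw [← neg_sub (c k), ← sum_Ico_sub c hak, ← sum_neg_distrib, sum_mul]
    refine norm_sum_le_of_le _ fun n hn => ?_
    rw [Finset.mem_Ico] at hn
    have hstep : c (n + 1) ≤ c n :=
      hanti ⟨hn.1, by omega⟩ ⟨by omega, by omega⟩ n.le_succ
    rw [norm_smul, neg_sub, Real.norm_of_nonneg (sub_nonneg.2 hstep)]
    exact mul_le_mul_of_nonneg_left (hs _) (sub_nonneg.2 hstep)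
  have range_le : c a - c k ≤ 2 * M := by
    linarith [le_of_abs_le (hc a ⟨le_rfl, hab⟩), neg_le_of_abs_le (hc k ⟨hak, k.lt_succ_self⟩)]
  rw [by_parts]
  calc _ ≤ ‖c k • s (k + 1)‖ + ‖c a • s a‖ + ‖∑ n ∈ Ico a k, (c n - c (n + 1)) • s (n + 1)‖ :=
        (norm_add_le _ _).trans (by gcongr; exact norm_sub_le _ _)
    _ ≤ M * R + M * R + 2 * M * R := by
        gcongr
        · exact norm_smul_le_of_mem k ⟨hak, k.lt_succ_self⟩ _
        · exact norm_smul_le_of_mem a ⟨le_rfl, hab⟩ _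
        · exact variation.trans (by gcongr)
    _ = 4 * M * R := by ring

theorem two_mul_le_sin_pi_mul {δ t : ℝ} (hδ : 0 ≤ δ) (ht : t ∈ Set.Icc δ (1 - δ)) :
    2 * δ ≤ Real.sin (π * t) := by
  have key : ∀ u, 0 ≤ u → u ≤ 1 / 2 → 2 * u ≤ Real.sin (π * u) := fun u h0 h1 => by
    have h := Real.mul_le_sin (x := π * u) (by positivity) (by nlinarith [Real.pi_pos])
    rwa [← mul_assoc, div_mul_cancel₀ _ Real.pi_ne_zero] at h
  rcases le_total t (1 / 2) with h | h
  · linarith [key t (hδ.trans ht.1) h, ht.1]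
  · have hsymm : Real.sin (π * (1 - t)) = Real.sin (π * t) := by
      rw [mul_one_sub, Real.sin_pi_sub]
    linarith [key (1 - t) (by linarith [ht.2]) (by linarith), ht.2]

theorem abs_cot_pi_mul_le {δ t : ℝ} (hδ : 0 < δ) (ht : t ∈ Set.Icc δ (1 - δ)) :
    |Real.cot (π * t)| ≤ 1 / (2 * δ) := by
  have hsin := two_mul_le_sin_pi_mul hδ.le ht
  rw [Real.cot_eq_cos_div_sin, abs_div, abs_of_pos (a := Real.sin _) (by linarith)]
  exact div_le_div₀ zero_le_one (Real.abs_cos_le_one _) (by linarith) hsin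

theorem antitoneOn_cot : AntitoneOn Real.cot (Set.Ioo 0 π) := by
  rintro x ⟨hx0, hxπ⟩ y ⟨hy0, hyπ⟩ hxy
  rw [Real.cot_eq_cos_div_sin, Real.cot_eq_cos_div_sin,
    div_le_div_iff₀ (Real.sin_pos_of_pos_of_lt_pi hy0 hyπ) (Real.sin_pos_of_pos_of_lt_pi hx0 hxπ)]
  have hsub := Real.sin_nonneg_of_nonneg_of_le_pi (sub_nonneg.2 hxy) (by linarith)
  rw [Real.sin_sub] at hsub
  linarith

theorem one_add_cot_mul_I_mul_fourierChar_sub_one {t : ℝ} (ht : Real.sin (π * t) ≠ 0) :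
    (1 + Real.cot (π * t) * Complex.I) * ((𝐞 t : ℂ) - 1) = -2 := by
  have hexp : (𝐞 t : ℂ) = (Real.cos (π * t) + Real.sin (π * t) * Complex.I) ^ 2 := by
    rw [Complex.ofReal_cos, Complex.ofReal_sin, ← Complex.exp_mul_I, ← Complex.exp_nat_mul,
      Real.fourierChar_apply]
    congr 1
    push_cast
    ring
  have hsq : (Real.sin (π * t) : ℂ) ^ 2 + (Real.cos (π * t) : ℂ) ^ 2 = 1 := by
    exact_mod_cast Real.sin_sq_add_cos_sq (π * t)
  have hsin : (Real.sin (π * t) : ℂ) ≠ 0 := by exact_mod_cast ht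
  rw [hexp, Real.cot_eq_cos_div_sin, Complex.ofReal_div]
  field_simp
  linear_combination (-Real.sin (π * t) + Real.cos (π * t) * Complex.I) * hsq +
    (2 * Real.cos (π * t) ^ 2 * Real.sin (π * t) +
      Real.sin (π * t) ^ 3 +
      Real.cos (π * t) * Real.sin (π * t) ^ 2 * Complex.I) * Complex.I_sq

theorem fourierChar_add_int (t : ℝ) (k : ℤ) : 𝐞 (t + k) = 𝐞 t := by
  rw [Real.fourierChar_apply', Real.fourierChar_apply', mul_add, mul_comm (2 * π) (k : ℝ)]
  exact (Circle.periodic_exp.int_mul k) _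

theorem norm_sum_fourierChar_le_card {ι : Type*} (s : Finset ι) (F : ι → ℝ) :
    ‖∑ i ∈ s, (𝐞 (F i) : ℂ)‖ ≤ #s := by
  simpa using norm_sum_le_of_le s (f := fun i => (𝐞 (F i) : ℂ)) fun i _ => (Circle.norm_coe _).le

-- Since `1 / (1 - 𝐞 t) = (1 + i cot πt) / 2`, each `𝐞 (f n)` is a forward difference weighted by a
-- monotone function of `Δ f n`, so partial summation applies.
theorem norm_sum_fourierChar_le_of_fwdDiff_mem_Icc {δ : ℝ} (hδ : 0 < δ)
    (hmem : ∀ n ∈ Set.Ico a b, Δ_[1] f n ∈ Set.Icc δ (1 - δ))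
    (hmono : MonotoneOn (Δ_[1] f) (Set.Ico a b)) :
    ‖∑ n ∈ Ico a b, (𝐞 (f n) : ℂ)‖ ≤ 1 + 1 / δ := by
  set e : ℕ → ℂ := fun n => 𝐞 (f n) with he
  set c : ℕ → ℝ := fun n => Real.cot (π * Δ_[1] f n)
  have norm_e (n : ℕ) : ‖e n‖ ≤ 1 := (Circle.norm_coe _).le
  have e_eq : ∀ n ∈ Ico a b, e n = (-1 / 2 : ℂ) * (Δ_[1] e n + Complex.I * (c n • Δ_[1] e n)) := by
    intro n hn
    rw [Finset.mem_Ico] at hn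
    have hΔ : Δ_[1] e n = e n * ((𝐞 (Δ_[1] f n) : ℂ) - 1) := by
      simp only [he, fwdDiff]
      rw [mul_sub_one, ← Circle.coe_mul, ← AddChar.map_add_eq_mul, add_sub_cancel]
    have hsin := two_mul_le_sin_pi_mul hδ.le (hmem n hn)
    rw [Complex.real_smul, hΔ]
    linear_combination (1 / 2 * e n) *
      one_add_cot_mul_I_mul_fourierChar_sub_one (t := Δ_[1] f n) (by linarith)
  have telescoping : ‖∑ n ∈ Ico a b, Δ_[1] e n‖ ≤ 2 := by
    rcases le_total a b with hab | hab
    · simp only [fwdDiff]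
      rw [sum_Ico_sub e hab]
      linarith [norm_sub_le (e b) (e a), norm_e a, norm_e b]
    · simp [Ico_eq_empty_of_le hab]
  have cot_sum : ‖∑ n ∈ Ico a b, c n • Δ_[1] e n‖ ≤ 4 * (1 / (2 * δ)) * 1 := by
    refine norm_sum_Ico_smul_fwdDiff_le (by positivity) (fun m hm n hn hmn => ?_)
      (fun n hn => abs_cot_pi_mul_le hδ (hmem n hn)) norm_e
    have mem_Ioo : ∀ i ∈ Set.Ico a b, π * Δ_[1] f i ∈ Set.Ioo 0 π := fun i hi => by
      have h := hmem i hi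
      constructor <;> nlinarith [h.1, h.2, Real.pi_pos]
    exact antitoneOn_cot (mem_Ioo m hm) (mem_Ioo n hn)
      (mul_le_mul_of_nonneg_left (hmono hm hn hmn) Real.pi_pos.le)
  rw [sum_congr rfl e_eq, ← mul_sum, sum_add_distrib, ← mul_sum, norm_mul]
  calc _ ≤ 1 / 2 * (2 + 4 * (1 / (2 * δ)) * 1) := by
        gcongr
        · norm_num
        · refine (norm_add_le _ _).trans (add_le_add telescoping ?_)
          rwa [norm_mul, Complex.norm_I, one_mul]
    _ = 1 + 1 / δ := by field_simp; ring

/-- The **Kusmin–Landau inequality**. -/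
theorem norm_sum_fourierChar_le_of_fwdDiff_mem_Icc_int {δ : ℝ} {k : ℤ} (hδ : 0 < δ)
    (hmem : ∀ n ∈ Set.Ico a b, Δ_[1] f n ∈ Set.Icc (k + δ) (k + 1 - δ))
    (hmono : MonotoneOn (Δ_[1] f) (Set.Ico a b)) :
    ‖∑ n ∈ Ico a b, (𝐞 (f n) : ℂ)‖ ≤ 1 + 1 / δ := by
  set g : ℕ → ℝ := fun n => f n - (k * n : ℤ) with hg
  have fourierChar_eq (n : ℕ) : 𝐞 (f n) = 𝐞 (g n) := by
    rw [← fourierChar_add_int (g n) (k * n), sub_add_cancel]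
  have fwdDiff_g (n : ℕ) : Δ_[1] g n = Δ_[1] f n - k := by
    simp only [hg, fwdDiff]
    push_cast
    ring
  simp only [fourierChar_eq]
  refine norm_sum_fourierChar_le_of_fwdDiff_mem_Icc hδ (fun n hn => ?_) fun m hm n hn hmn => ?_
  · obtain ⟨hlow, hup⟩ := hmem n hn
    rw [fwdDiff_g]
    constructor <;> linarith
  · rw [fwdDiff_g, fwdDiff_g]
    exact sub_le_sub_right (hmono hm hn hmn) _

theorem sub_mul_le_of_le_fwdDiff {l : ℝ} (hab : a ≤ b) (hl : ∀ n ∈ Set.Ico a b, l ≤ Δ_[1] f n) :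
    ((b : ℝ) - a) * l ≤ f b - f a := by
  rw [← sum_Ico_sub f hab, ← Nat.cast_sub hab, ← Nat.card_Ico, ← nsmul_eq_mul]
  exact card_nsmul_le_sum _ _ _ fun n hn => hl n (Finset.mem_Ico.1 hn)

theorem sub_le_mul_of_fwdDiff_le {u : ℝ} (hab : a ≤ b) (hu : ∀ n ∈ Set.Ico a b, Δ_[1] f n ≤ u) :
    f b - f a ≤ ((b : ℝ) - a) * u := by
  rw [← sum_Ico_sub f hab, ← Nat.cast_sub hab, ← Nat.card_Ico, ← nsmul_eq_mul]
  exact sum_le_card_nsmul _ _ _ fun n hn => hu n (Finset.mem_Ico.1 hn)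

theorem monotoneOn_of_fwdDiff_nonneg (hf : ∀ n ∈ Set.Ico a b, 0 ≤ Δ_[1] f n) :
    MonotoneOn f (Set.Icc a b) :=
  monotoneOn_of_le_succ Set.ordConnected_Icc fun n _ hn hn' =>
    sub_nonneg.1 (hf n ⟨hn.1, Nat.lt_of_succ_le hn'.2⟩)

theorem exists_filter_eq_Ico_of_monotoneOn {α : Type*} [PartialOrder α] [DecidableEq α] {h : ℕ → α}
    (hmono : MonotoneOn h (Set.Ico a b)) (k : α) : ∃ u v, {n ∈ Ico a b | h n = k} = Ico u v := by
  rcases ({n ∈ Ico a b | h n = k} : Finset ℕ).eq_empty_or_nonempty with hs | hs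
  · exact ⟨0, 0, by rw [hs, Finset.Ico_self]⟩
  obtain ⟨hmin, hmink⟩ := mem_filter.1 (min'_mem _ hs)
  obtain ⟨hmax, hmaxk⟩ := mem_filter.1 (max'_mem _ hs)
  refine ⟨min' _ hs, max' _ hs + 1, ?_⟩
  ext n
  refine ⟨fun hn => Finset.mem_Ico.2 ⟨min'_le _ n hn, Nat.lt_succ_of_le (le_max' _ n hn)⟩,
    fun hn => ?_⟩
  rw [Finset.mem_Ico] at hn hmin hmax
  have hnab : n ∈ Set.Ico a b := ⟨by omega, by omega⟩
  exact mem_filter.2 ⟨Finset.mem_Ico.2 hnab, le_antisymm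
    ((hmono hnab hmax (by omega)).trans_eq hmaxk) (hmink.symm.trans_le (hmono hmin hnab hn.1))⟩

theorem norm_sum_fourierChar_le_trim_add {j : ℕ} (hj : a + 2 * j ≤ b) :
    ‖∑ n ∈ Ico a b, (𝐞 (f n) : ℂ)‖ ≤ ‖∑ n ∈ Ico (a + j) (b - j), (𝐞 (f n) : ℂ)‖ + 2 * j := by
  have hleft := norm_sum_fourierChar_le_card (Ico a (a + j)) f
  have hright := norm_sum_fourierChar_le_card (Ico (b - j) b) f
  rw [Nat.card_Ico, Nat.add_sub_cancel_left] at hleft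
  rw [Nat.card_Ico, Nat.sub_sub_self (by omega)] at hright
  rw [← sum_Ico_consecutive _ (by omega : a ≤ a + j) (by omega : a + j ≤ b),
    ← sum_Ico_consecutive _ (by omega : a + j ≤ b - j) (by omega : b - j ≤ b)]
  refine (norm_add_le _ _).trans ((add_le_add_right (norm_add_le _ _) _).trans ?_)
  linarith

theorem norm_sum_fourierChar_le_of_floor_fwdDiff_eq {l : ℝ} {k : ℤ} (hl : 0 < l)
    (hk : ∀ n ∈ Set.Ico a b, ⌊Δ_[1] f n⌋ = k)
    (hconv : ∀ n ∈ Set.Ico a b, l ≤ Δ_[1] (Δ_[1] f) n) :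
    ‖∑ n ∈ Ico a b, (𝐞 (f n) : ℂ)‖ ≤ 3 / √l + 3 := by
  have hsl : 0 < √l := Real.sqrt_pos.2 hl
  set j := ⌈1 / √l⌉₊
  have hj : (j : ℝ) ≤ 1 / √l + 1 := (Nat.ceil_lt_add_one (by positivity)).le
  have hthree : 3 / √l = 1 / √l + 1 / √l + 1 / √l := by ring
  rcases le_or_gt (b - a) (2 * j) with hba | hba
  · calc _ ≤ ((b - a : ℕ) : ℝ) := by simpa using norm_sum_fourierChar_le_card (Ico a b) f
      _ ≤ 2 * j := by exact_mod_cast hba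
      _ ≤ 3 / √l + 3 := by linarith [one_div_pos.2 hsl]
  have hsqrt_le : √l ≤ j * l := by
    calc √l = 1 / √l * l := by rw [one_div_mul_eq_div, Real.div_sqrt]
      _ ≤ j * l := by gcongr; exact Nat.le_ceil _
  have hgrowth : ∀ m n, a ≤ m → m ≤ n → n ≤ b →
      ((n : ℝ) - m) * l ≤ Δ_[1] f n - Δ_[1] f m := fun m n ham hmn hnb =>
    sub_mul_le_of_le_fwdDiff hmn fun i hi => hconv i ⟨ham.trans hi.1, hi.2.trans_le hnb⟩
  have middle : ‖∑ n ∈ Ico (a + j) (b - j), (𝐞 (f n) : ℂ)‖ ≤ 1 + 1 / √l := by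
    refine norm_sum_fourierChar_le_of_fwdDiff_mem_Icc_int (k := k) hsl (fun n hn => ?_) ?_
    · obtain ⟨hn1, hn2⟩ := hn
      have hlow := hgrowth (n - j) n (by omega) (by omega) (by omega)
      have hup := hgrowth n (n + j) (by omega) (by omega) (by omega)
      have hfl := Int.floor_le (Δ_[1] f (n - j))
      have hfu := Int.lt_floor_add_one (Δ_[1] f (n + j))
      rw [hk _ ⟨by omega, by omega⟩] at hfl hfu
      rw [Nat.cast_sub (by omega), sub_sub_cancel] at hlow
      rw [Nat.cast_add, add_sub_cancel_left] at hup
      constructor <;> linarith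
    · exact (monotoneOn_of_fwdDiff_nonneg fun n hn => hl.le.trans (hconv n hn)).mono
        fun n hn => ⟨(Nat.le_add_right a j).trans hn.1, hn.2.le.trans (Nat.sub_le b j)⟩
  linarith [norm_sum_fourierChar_le_trim_add (f := f) (a := a) (b := b) (j := j) (by omega)]

theorem card_Icc_floor_le {s t : ℝ} (hst : s ≤ t) : (#(Icc ⌊s⌋ ⌊t⌋) : ℝ) ≤ t - s + 2 := by
  have hle := Int.floor_mono hst
  rw [Int.card_Icc, ← Int.cast_natCast, Int.toNat_of_nonneg (by omega)]
  push_cast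
  linarith [Int.floor_le t, Int.sub_one_lt_floor s]

/-- **Van der Corput's second derivative test**. -/
theorem norm_sum_fourierChar_le_of_fwdDiff_fwdDiff {l A : ℝ} (hab : a ≤ b) (hl : 0 < l)
    (hA : 1 ≤ A) (hlow : ∀ n ∈ Set.Ico a b, l ≤ Δ_[1] (Δ_[1] f) n)
    (hup : ∀ n ∈ Set.Ico a b, Δ_[1] (Δ_[1] f) n ≤ A * l) :
    ‖∑ n ∈ Ico a b, (𝐞 (f n) : ℂ)‖ ≤ 6 * A * (b - a) * √l + 12 / √l := by
  have hsl : 0 < √l := Real.sqrt_pos.2 hl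
  have hab' : (0 : ℝ) ≤ b - a := sub_nonneg.2 (Nat.cast_le.2 hab)
  rcases le_or_gt 1 l with h1 | h1
  · have htriv := norm_sum_fourierChar_le_card (Ico a b) f
    rw [Nat.card_Ico, Nat.cast_sub hab] at htriv
    have hone : 1 ≤ 6 * A * √l := by nlinarith [Real.one_le_sqrt.2 h1]
    have := mul_le_mul_of_nonneg_right hone hab'
    have := div_pos (by norm_num : (0 : ℝ) < 12) hsl
    linarith
  set g := Δ_[1] f
  have hmono : MonotoneOn g (Set.Icc a b) :=
    monotoneOn_of_fwdDiff_nonneg fun n hn => hl.le.trans (hlow n hn)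
  have hmaps : ∀ n ∈ Ico a b, ⌊g n⌋ ∈ Icc ⌊g a⌋ ⌊g b⌋ := fun n hn => by
    have hn := Set.Ico_subset_Icc_self (Finset.mem_Ico.1 hn)
    exact Finset.mem_Icc.2 ⟨Int.floor_mono (hmono (Set.left_mem_Icc.2 hab) hn hn.1),
      Int.floor_mono (hmono hn (Set.right_mem_Icc.2 hab) hn.2)⟩
  have hfibre : ∀ k ∈ Icc ⌊g a⌋ ⌊g b⌋,
      ‖∑ n ∈ Ico a b with ⌊g n⌋ = k, (𝐞 (f n) : ℂ)‖ ≤ 6 / √l := by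
    intro k _
    obtain ⟨u, v, huv⟩ := exists_filter_eq_Ico_of_monotoneOn
      (Int.floor_mono.comp_monotoneOn (hmono.mono Set.Ico_subset_Icc_self)) k
    have hmem : ∀ n ∈ Set.Ico u v, n ∈ Set.Ico a b ∧ ⌊g n⌋ = k := fun n hn => by
      simpa [← huv] using Finset.mem_Ico.2 hn
    have h3 : 3 ≤ 3 / √l := by
      rw [le_div_iff₀ hsl]
      nlinarith [Real.sqrt_le_one.2 h1.le]
    calc _ = ‖∑ n ∈ Ico u v, (𝐞 (f n) : ℂ)‖ := by rw [← huv]; rfl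
      _ ≤ 3 / √l + 3 := norm_sum_fourierChar_le_of_floor_fwdDiff_eq hl
        (fun n hn => (hmem n hn).2) fun n hn => hlow n (hmem n hn).1
      _ ≤ 3 / √l + 3 / √l := by gcongr
      _ = 6 / √l := by ring
  have hcard : (#(Icc ⌊g a⌋ ⌊g b⌋) : ℝ) ≤ (b - a) * (A * l) + 2 := by
    have hgab := hmono (Set.left_mem_Icc.2 hab) (Set.right_mem_Icc.2 hab) hab
    linarith [card_Icc_floor_le hgab, sub_le_mul_of_fwdDiff_le hab hup]
  rw [← sum_fiberwise_of_maps_to hmaps]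
  calc _ ≤ #(Icc ⌊g a⌋ ⌊g b⌋) • (6 / √l) := by
        rw [← sum_const]; exact norm_sum_le_of_le _ hfibre
    _ ≤ ((b - a) * (A * l) + 2) * (6 / √l) := by rw [nsmul_eq_mul]; gcongr
    _ = 6 * A * (b - a) * (l / √l) + 12 / √l := by ring
    _ = _ := by rw [Real.div_sqrt]

end ExponentialSums

section Sawtooth

/-- The sawtooth function `ψ(t) = {t} - 1/2`, equal to `-1/2` (not `0`) at the integers. -/
noncomputable def sawtooth (t : ℝ) : ℝ := Int.fract t - 1 / 2

theorem abs_sawtooth_le (t : ℝ) : |sawtooth t| ≤ 1 / 2 := by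
  rw [sawtooth, abs_le]
  constructor <;> linarith [Int.fract_nonneg t, Int.fract_lt_one t]

theorem abs_sum_sawtooth_le_card {ι : Type*} (s : Finset ι) (F : ι → ℝ) :
    |∑ i ∈ s, sawtooth (F i)| ≤ #s / 2 := by
  simpa [div_eq_mul_inv] using (abs_sum_le_sum_abs _ s).trans
    (sum_le_card_nsmul s _ _ fun i _ => abs_sawtooth_le (F i))

theorem hasSum_re_fourierChar_div_sq (t : ℝ) :
    HasSum (fun h : ℕ => (𝐞 (h * t) : ℂ).re / (h : ℝ) ^ 2)
      (π ^ 2 * bernoulliFun 2 (Int.fract t)) := by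
  convert hasSum_one_div_nat_pow_mul_cos one_ne_zero
    (x := Int.fract t) ⟨Int.fract_nonneg t, (Int.fract_lt_one t).le⟩ using 1
  · ext h
    have hfract : (h : ℝ) * t = h * Int.fract t + (h * ⌊t⌋ : ℤ) := by
      push_cast
      rw [← mul_add, Int.fract_add_floor]
    rw [hfract, fourierChar_add_int, Real.fourierChar_apply, Complex.exp_ofReal_mul_I_re,
      one_div_mul_eq_div, mul_one, mul_assoc (2 * π)]
  · simp only [bernoulliFun, Nat.factorial]
    push_cast
    ring

theorem fract_add_eq_or {t Δ : ℝ} (h0 : 0 ≤ Δ) (h1 : Δ ≤ 1) :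
    (Int.fract t + Δ < 1 ∧ Int.fract (t + Δ) = Int.fract t + Δ) ∨
      (1 ≤ Int.fract t + Δ ∧ Int.fract (t + Δ) = Int.fract t + Δ - 1) := by
  have hnonneg := Int.fract_nonneg t
  have hlt := Int.fract_lt_one t
  have hsplit := Int.fract_add_floor t
  rcases lt_or_ge (Int.fract t + Δ) 1 with h | h
  · exact .inl ⟨h, Int.fract_eq_iff.2 ⟨by linarith, h, ⌊t⌋, by linarith⟩⟩
  · exact .inr ⟨h, Int.fract_eq_iff.2
      ⟨by linarith, by linarith, ⌊t⌋ + 1, by push_cast; linarith⟩⟩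

theorem bernoulliFun_two_fract_add_sub_le {t Δ : ℝ} (h0 : 0 ≤ Δ) (h1 : Δ ≤ 1) :
    bernoulliFun 2 (Int.fract (t + Δ)) - bernoulliFun 2 (Int.fract t) ≤
      2 * Δ * (sawtooth t + Δ / 2) := by
  rw [bernoulliFun_two, bernoulliFun_two, sawtooth]
  rcases fract_add_eq_or (t := t) h0 h1 with ⟨_, h⟩ | ⟨_, h⟩ <;> rw [h] <;> nlinarith

theorem le_bernoulliFun_two_fract_add_sub {t Δ : ℝ} (h0 : 0 ≤ Δ) (h1 : Δ ≤ 1) :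
    2 * Δ * (sawtooth (t + Δ) - Δ / 2) ≤
      bernoulliFun 2 (Int.fract (t + Δ)) - bernoulliFun 2 (Int.fract t) := by
  rw [bernoulliFun_two, bernoulliFun_two, sawtooth]
  rcases fract_add_eq_or (t := t) h0 h1 with ⟨_, h⟩ | ⟨_, h⟩ <;> rw [h] <;>
    nlinarith [Int.fract_lt_one t]

-- With `u = √h`, `v = √(h + 1)`, `r = √Δ`, this majorant telescopes over `h` to at most `8√Δ`,
-- which avoids splitting the sum at `h = 1/Δ`.
theorem min_one_div_cube_le_telescope {u v r : ℝ} (hu : 0 ≤ u) (hv : 0 < v)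
    (huv : v ^ 2 = u ^ 2 + 1) (hr : 0 ≤ r) :
    min 1 (v ^ 2 * r ^ 2) / v ^ 3 ≤ 8 * r * (v * r / (v * r + 1) - u * r / (u * r + 1)) := by
  have huv' : u ≤ v := by nlinarith
  have hdiff : v - u = 1 / (v + u) := by
    rw [eq_div_iff (by positivity)]
    linear_combination huv
  calc min 1 (v ^ 2 * r ^ 2) / v ^ 3 ≤ 4 * r ^ 2 / (v * (v * r + 1) ^ 2) := by
        rw [div_le_div_iff₀ (by positivity) (by positivity)]
        rcases le_total (v * r) 1 with h | h
        · calc _ ≤ v ^ 2 * r ^ 2 * (v * (v * r + 1) ^ 2) := by gcongr; exact min_le_right _ _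
            _ ≤ v ^ 2 * r ^ 2 * (v * (1 + 1) ^ 2) := by gcongr
            _ = _ := by ring
        · calc _ ≤ 1 * (v * (v * r + 1) ^ 2) := by gcongr; exact min_le_left _ _
            _ ≤ 1 * (v * (v * r + v * r) ^ 2) := by gcongr
            _ = _ := by ring
    _ = 8 * r * (r * (1 / (v + v)) / ((v * r + 1) * (v * r + 1))) := by field_simp; ring
    _ ≤ 8 * r * (r * (1 / (v + u)) / ((v * r + 1) * (u * r + 1))) := by gcongr
    _ = 8 * r * (v * r / (v * r + 1) - u * r / (u * r + 1)) := by
        rw [← hdiff]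
        field_simp
        ring

theorem sum_range_min_one_div_sqrt_cube_le {Δ : ℝ} (hΔ : 0 ≤ Δ) (M : ℕ) :
    ∑ h ∈ range M, min 1 (h * Δ) / √h ^ 3 ≤ 8 * √Δ := by
  rcases M with _ | M
  · simp
  set r := √Δ with hr
  have partial_sum : ∑ h ∈ range (M + 1), min 1 (h * Δ) / √h ^ 3 ≤
      8 * r * (√M * r / (√M * r + 1)) := by
    induction M with
    | zero => simp
    | succ M ih =>
      have hsucc := min_one_div_cube_le_telescope (r := r) (Real.sqrt_nonneg M)
        (Real.sqrt_pos.2 (by positivity : (0 : ℝ) < (M + 1 : ℕ)))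
        (by rw [Real.sq_sqrt (by positivity), Real.sq_sqrt (by positivity)]; push_cast; rfl)
        (Real.sqrt_nonneg Δ)
      rw [hr, Real.sq_sqrt (by positivity), Real.sq_sqrt hΔ] at hsucc
      rw [sum_range_succ]
      linarith
  refine partial_sum.trans (mul_le_of_le_one_right (by positivity) ?_)
  exact (div_le_one (by positivity)).2 (by linarith)

theorem norm_fourierChar_sub_one_le (h : ℕ) (Δ : ℝ) :
    ‖(𝐞 (h * Δ) : ℂ) - 1‖ ≤ 2 * π * min 1 (h * |Δ|) := by
  rw [mul_min_of_nonneg _ _ (by positivity), le_min_iff]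
  constructor
  · calc _ ≤ ‖(𝐞 (h * Δ) : ℂ)‖ + ‖(1 : ℂ)‖ := norm_sub_le _ _
      _ ≤ 2 * π * 1 := by rw [Circle.norm_coe, norm_one]; linarith [Real.pi_gt_three]
  · rw [Real.fourierChar_apply, mul_comm _ Complex.I]
    refine Real.norm_exp_I_mul_ofReal_sub_one_le.trans_eq ?_
    rw [norm_mul, Real.norm_of_nonneg (by positivity), norm_mul, Real.norm_natCast,
      Real.norm_eq_abs]

variable {ι : Type*} {s : Finset ι} {F : ι → ℝ} {P Q Δ : ℝ}

theorem abs_re_sum_fourierChar_sub_le (hQ : 0 ≤ Q)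
    (hexp : ∀ h : ℕ, 1 ≤ h → ‖∑ i ∈ s, (𝐞 (h * F i) : ℂ)‖ ≤ P * √h + Q / √h) (h : ℕ) :
    |∑ i ∈ s, ((𝐞 (h * (F i + Δ)) : ℂ).re / (h : ℝ) ^ 2 - (𝐞 (h * F i) : ℂ).re / (h : ℝ) ^ 2)| ≤
      2 * π * (P * (min 1 (h * |Δ|) / √h ^ 3) + Q * |Δ| * (min 1 (h * 1 : ℝ) / √h ^ 3)) := by
  rcases h.eq_zero_or_pos with rfl | hh
  · simp
  have hh1 : (1 : ℝ) ≤ h := by exact_mod_cast hh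
  have hfactor : ∑ i ∈ s, ((𝐞 (h * (F i + Δ)) : ℂ).re / (h : ℝ) ^ 2 -
      (𝐞 (h * F i) : ℂ).re / (h : ℝ) ^ 2) =
      (((𝐞 (h * Δ) : ℂ) - 1) * ∑ i ∈ s, (𝐞 (h * F i) : ℂ)).re / (h : ℝ) ^ 2 := by
    rw [mul_sum, Complex.re_sum, sum_div]
    refine sum_congr rfl fun i _ => ?_
    rw [← sub_div, mul_add, AddChar.map_add_eq_mul, Circle.coe_mul, ← Complex.sub_re]
    ring_nf
  have hsqrt : (√h) ^ 2 = (h : ℝ) := Real.sq_sqrt (by positivity)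
  have hpow_four : (h : ℝ) ^ 2 = √h ^ 4 := by rw [pow_mul (√h) 2 2, hsqrt]
  have hmin : min 1 (h * |Δ|) ≤ h * |Δ| := min_le_right _ _
  rw [hfactor, abs_div, abs_of_pos (by positivity : 0 < (h : ℝ) ^ 2), mul_one, min_eq_left hh1]
  calc _ ≤ 2 * π * min 1 (h * |Δ|) * (P * √h + Q / √h) / (h : ℝ) ^ 2 := by
        gcongr
        refine (Complex.abs_re_le_norm _).trans ?_
        rw [norm_mul]
        gcongr
        · exact norm_fourierChar_sub_one_le h Δ
        · exact hexp h hh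
    _ = 2 * π * (P * (min 1 (h * |Δ|) / √h ^ 3) + Q * min 1 (h * |Δ|) / √h ^ 5) := by
        rw [hpow_four]
        field_simp
    _ ≤ 2 * π * (P * (min 1 (h * |Δ|) / √h ^ 3) + Q * (h * |Δ|) / √h ^ 5) := by gcongr
    _ = _ := by nth_rewrite 3 [← hsqrt]; field_simp

theorem abs_sum_bernoulliFun_two_sub_le (hP : 0 ≤ P) (hQ : 0 ≤ Q)
    (hexp : ∀ h : ℕ, 1 ≤ h → ‖∑ i ∈ s, (𝐞 (h * F i) : ℂ)‖ ≤ P * √h + Q / √h) :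
    |∑ i ∈ s, (bernoulliFun 2 (Int.fract (F i + Δ)) - bernoulliFun 2 (Int.fract (F i)))| ≤
      6 * (P * √|Δ| + Q * |Δ|) := by
  have hseries := hasSum_sum fun i (_ : i ∈ s) =>
    (hasSum_re_fourierChar_div_sq (F i + Δ)).sub (hasSum_re_fourierChar_div_sq (F i))
  simp only [← mul_sub, ← mul_sum] at hseries
  have hbound : |π ^ 2 * ∑ i ∈ s,
      (bernoulliFun 2 (Int.fract (F i + Δ)) - bernoulliFun 2 (Int.fract (F i)))| ≤
      2 * π * (P * (8 * √|Δ|) + Q * |Δ| * (8 * √1)) := by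
    refine le_of_tendsto hseries.tendsto_sum_nat.abs (Eventually.of_forall fun M => ?_)
    calc _ ≤ ∑ h ∈ range M,
          2 * π * (P * (min 1 (h * |Δ|) / √h ^ 3) + Q * |Δ| * (min 1 (h * 1 : ℝ) / √h ^ 3)) :=
          (abs_sum_le_sum_abs _ _).trans
            (sum_le_sum fun h _ => abs_re_sum_fourierChar_sub_le hQ hexp h)
      _ ≤ _ := by
          rw [← mul_sum, sum_add_distrib, ← mul_sum, ← mul_sum]
          gcongr
          · exact sum_range_min_one_div_sqrt_cube_le (abs_nonneg Δ) M
          · exact sum_range_min_one_div_sqrt_cube_le zero_le_one M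
  rw [abs_mul, abs_of_pos (by positivity : 0 < π ^ 2), Real.sqrt_one, mul_one] at hbound
  have hPQ : 0 ≤ P * √|Δ| + Q * |Δ| := by positivity
  refine le_of_mul_le_mul_left ?_ (by positivity : 0 < π ^ 2)
  nlinarith [Real.pi_gt_three, mul_nonneg Real.pi_pos.le hPQ]

theorem abs_sum_sawtooth_le (hP : 0 ≤ P) (hQ : 0 ≤ Q) (hΔ : Δ ∈ Set.Ioc 0 1)
    (hexp : ∀ h : ℕ, 1 ≤ h → ‖∑ i ∈ s, (𝐞 (h * F i) : ℂ)‖ ≤ P * √h + Q / √h) :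
    |∑ i ∈ s, sawtooth (F i)| ≤ #s * Δ / 2 + 3 * (P / √Δ + Q) := by
  obtain ⟨hΔ0, hΔ1⟩ := hΔ
  have hup := abs_sum_bernoulliFun_two_sub_le (Δ := Δ) hP hQ hexp
  have hdown := abs_sum_bernoulliFun_two_sub_le (Δ := -Δ) hP hQ hexp
  rw [abs_of_pos hΔ0] at hup
  rw [abs_neg, abs_of_pos hΔ0, ← abs_neg, ← sum_neg_distrib] at hdown
  have hsmooth : 6 * (P * √Δ + Q * Δ) = 2 * Δ * (3 * (P / √Δ + Q)) := by
    linear_combination -6 * P * Real.div_sqrt (x := Δ)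
  have hlower := sum_le_sum fun i (_ : i ∈ s) =>
    bernoulliFun_two_fract_add_sub_le (t := F i) hΔ0.le hΔ1
  have hupper := sum_le_sum fun i (_ : i ∈ s) =>
    le_bernoulliFun_two_fract_add_sub (t := F i + -Δ) hΔ0.le hΔ1
  simp only [neg_add_cancel_right, ← mul_sum, sum_add_distrib, sum_sub_distrib, sum_const,
    nsmul_eq_mul, neg_sub] at hlower hupper hup hdown
  rw [abs_le]
  constructor
  · have := (neg_le_of_abs_le hup).trans hlower
    nlinarith
  · have := hupper.trans (le_of_abs_le hdown)
    nlinarith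

theorem fwdDiff_fwdDiff_mul_div_add {h z θ c : ℝ} {l : ℕ} (hl : 0 < l + θ) :
    Δ_[1] (Δ_[1] fun l : ℕ => h * (z / (l + θ) + c)) l =
      2 * h * z / ((l + θ) * (l + θ + 1) * (l + θ + 2)) := by
  have hl1 : (l : ℝ) + 1 + θ ≠ 0 := by linarith
  have hl1' : (l : ℝ) + θ + 1 ≠ 0 := by linarith
  have hl2 : (l : ℝ) + 1 + 1 + θ ≠ 0 := by linarith
  have hl2' : (l : ℝ) + θ + 2 ≠ 0 := by linarith
  simp only [fwdDiff]
  push_cast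
  field_simp
  ring

theorem norm_sum_fourierChar_div_add_dyadic_le {r θ : ℝ} (c : ℝ) {K h : ℕ} (hr : 0 < r)
    (hθ : θ ∈ Set.Icc 0 1) (hK : 1 ≤ K) (hh : 1 ≤ h) :
    ‖∑ l ∈ Ico (K / 2 + 1) (K + 1), (𝐞 (h * ((K * r ^ 2) ^ 3 / (l + θ) + c)) : ℂ)‖ ≤
      768 * K * r ^ 3 * √h + 96 / r ^ 3 / √h := by
  obtain ⟨hθ0, hθ1⟩ := hθ
  have hK1 : (1 : ℝ) ≤ K := by exact_mod_cast hK
  have hmem : ∀ l ∈ Set.Ico (K / 2 + 1) (K + 1), l + θ ∈ Set.Icc (K / 2 : ℝ) (2 * K) :=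
    fun l ⟨hl1, hl2⟩ => by
      have hlow : (K : ℝ) ≤ 2 * l := by exact_mod_cast (by omega : K ≤ 2 * l)
      have hup : (l : ℝ) ≤ K := by exact_mod_cast Nat.lt_succ_iff.1 hl2
      constructor <;> linarith
  have hsqrt : √((√h * r ^ 3 / 8) ^ 2) = √h * r ^ 3 / 8 := Real.sqrt_sq (by positivity)
  have hlength : ((K + 1 : ℕ) : ℝ) - (K / 2 + 1 : ℕ) ≤ K := by
    push_cast
    linarith [(K / 2).cast_nonneg (α := ℝ)]
  calc _ ≤ 6 * 1024 * (((K + 1 : ℕ) : ℝ) - (K / 2 + 1 : ℕ)) * √((√h * r ^ 3 / 8) ^ 2) +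
        12 / √((√h * r ^ 3 / 8) ^ 2) := by
        refine norm_sum_fourierChar_le_of_fwdDiff_fwdDiff
          (f := fun l : ℕ => h * ((K * r ^ 2) ^ 3 / (l + θ) + c))
          (by omega) (by positivity) (by norm_num) (fun l hl => ?_) fun l hl => ?_
        all_goals
          obtain ⟨hl1, hl2⟩ := hmem l hl
          have hpos : 0 < l + θ := by linarith
          rw [fwdDiff_fwdDiff_mul_div_add hpos, div_pow, mul_pow √_, Real.sq_sqrt (by positivity)]
          generalize l + θ = w at hl1 hl2 hpos ⊢
        · calc h * (r ^ 3) ^ 2 / 8 ^ 2 ≤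
                2 * h * (K * r ^ 2) ^ 3 / (4 * K * (4 * K) * (4 * K)) := by
                  field_simp; norm_num
            _ ≤ _ := by gcongr <;> linarith
        · calc _ ≤ 2 * h * (K * r ^ 2) ^ 3 / (K / 2 * (K / 2) * (K / 2)) := by
                gcongr <;> linarith
            _ = _ := by field_simp; norm_num
    _ ≤ 6 * 1024 * K * (√h * r ^ 3 / 8) + 12 / (√h * r ^ 3 / 8) := by rw [hsqrt]; gcongr
    _ = _ := by field_simp; ring

theorem abs_sum_sawtooth_div_add_dyadic_le {Y θ : ℝ} (c : ℝ) {K : ℕ} (hY : 1 ≤ Y)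
    (hθ : θ ∈ Set.Icc 0 1) (hK : (K : ℝ) ^ 2 ≤ Y ^ 3) :
    |∑ l ∈ Ico (K / 2 + 1) (K + 1), sawtooth (Y ^ 3 / (l + θ) + c)| ≤ 2600 * Y := by
  have hcard : (#(Ico (K / 2 + 1) (K + 1)) : ℝ) ≤ K := by
    rw [Nat.card_Ico]
    exact_mod_cast (by omega)
  rcases le_or_gt (K : ℝ) Y with hKY | hKY
  · exact (abs_sum_sawtooth_le_card _ _).trans (by linarith)
  have hK0 : (0 : ℝ) < K := by linarith
  -- The smoothing length `Δ = r ^ 2` makes the trivial loss `K Δ` equal to the target `Y`.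
  obtain ⟨r, hr, rfl⟩ : ∃ r : ℝ, 0 < r ∧ K * r ^ 2 = Y :=
    ⟨√(Y / K), by positivity, by rw [Real.sq_sqrt (by positivity), mul_div_cancel₀ _ hK0.ne']⟩
  have hr1 : r ≤ 1 := by
    rw [← sq_le_one_iff₀ hr.le]
    exact le_of_mul_le_mul_left (by linarith) hK0
  have hinv : 1 / r ^ 3 ≤ K * r ^ 2 := by
    have hone : 1 ≤ K * r ^ 6 :=
      le_of_mul_le_mul_left (by linarith : (K : ℝ) ^ 2 * 1 ≤ K ^ 2 * (K * r ^ 6)) (by positivity)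
    rw [div_le_iff₀ (by positivity)]
    calc 1 ≤ K * r ^ 6 := hone
      _ ≤ K * r ^ 5 := by gcongr ?_ * ?_; exact pow_le_pow_of_le_one hr.le hr1 (by norm_num)
      _ = _ := by ring
  calc _ ≤ #(Ico (K / 2 + 1) (K + 1)) * r ^ 2 / 2 +
        3 * (768 * K * r ^ 3 / √(r ^ 2) + 96 / r ^ 3) :=
        abs_sum_sawtooth_le (by positivity) (by positivity)
          ⟨by positivity, pow_le_one₀ hr.le hr1⟩ fun h hh =>
            norm_sum_fourierChar_div_add_dyadic_le c hr hθ (Nat.cast_pos.1 hK0) hh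
    _ ≤ K * r ^ 2 / 2 + 3 * (768 * (K * r ^ 2) + 96 * (1 / r ^ 3)) := by
        rw [Real.sqrt_sq hr.le]
        gcongr
        · exact le_of_eq (by field_simp)
        · exact le_of_eq (by ring)
    _ ≤ 2600 * (K * r ^ 2) := by linarith

theorem abs_sum_sawtooth_div_add_le_natLog {Y θ : ℝ} (c : ℝ) {K : ℕ} (hY : 1 ≤ Y)
    (hθ : θ ∈ Set.Icc 0 1) (hK : (K : ℝ) ^ 2 ≤ Y ^ 3) :
    |∑ l ∈ Ico 1 (K + 1), sawtooth (Y ^ 3 / (l + θ) + c)| ≤ 2600 * Y * Nat.log 2 (2 * K) := by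
  induction K using Nat.strong_induction_on with
  | _ K ih =>
    rcases K.eq_zero_or_pos with rfl | hK0
    · simp
    have hhalf : ((K / 2 : ℕ) : ℝ) ≤ K := by exact_mod_cast Nat.div_le_self K 2
    have hlog : Nat.log 2 (2 * (K / 2)) + 1 ≤ Nat.log 2 (2 * K) := by
      rw [mul_comm 2 K, Nat.log_mul_base one_lt_two hK0.ne']
      exact Nat.succ_le_succ (Nat.log_mono_right (Nat.mul_div_le K 2))
    rw [← sum_Ico_consecutive _ (by omega : 1 ≤ K / 2 + 1) (by omega : K / 2 + 1 ≤ K + 1)]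
    calc _ ≤ 2600 * Y * Nat.log 2 (2 * (K / 2)) + 2600 * Y :=
          (abs_add_le _ _).trans (add_le_add
            (ih (K / 2) (Nat.div_lt_self hK0 one_lt_two) (le_trans (by gcongr) hK))
            (abs_sum_sawtooth_div_add_dyadic_le c hY hθ hK))
      _ = 2600 * Y * (Nat.log 2 (2 * (K / 2)) + 1 : ℕ) := by push_cast; ring
      _ ≤ 2600 * Y * Nat.log 2 (2 * K) := by gcongr

theorem natLog_two_two_mul_le {K : ℕ} {y : ℝ} (hy : 1 ≤ y) (hK : (K : ℝ) ^ 2 ≤ y) :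
    (Nat.log 2 (2 * K) : ℝ) ≤ 1 + Real.log y := by
  have hlogy := Real.log_nonneg hy
  rcases K.eq_zero_or_pos with rfl | hK0
  · simpa using add_nonneg zero_le_one hlogy
  have hK1 : (1 : ℝ) ≤ K := by exact_mod_cast hK0
  have hlogK : 2 * Real.log K ≤ Real.log y := by
    simpa using Real.log_le_log (by positivity) hK
  have hlogb : (Nat.log 2 K : ℝ) ≤ Real.log K / Real.log 2 := Real.natLog_le_logb K 2
  have htwo : Real.log K / Real.log 2 ≤ 2 * Real.log K := by
    rw [div_le_iff₀ (Real.log_pos one_lt_two)]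
    nlinarith [Real.log_two_gt_d9, Real.log_nonneg hK1]
  rw [mul_comm, Nat.log_mul_base one_lt_two hK0.ne']
  push_cast
  linarith

theorem abs_sum_sawtooth_div_add_le {y θ : ℝ} (c : ℝ) {K : ℕ} (hy : 1 ≤ y)
    (hθ : θ ∈ Set.Icc 0 1) (hK : (K : ℝ) ^ 2 ≤ y) :
    |∑ l ∈ Icc 1 K, sawtooth (y / (l + θ) + c)| ≤
      2600 * y ^ (1 / 3 : ℝ) * (1 + Real.log y) := by
  have hcube : (y ^ (1 / 3 : ℝ)) ^ 3 = y := by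
    rw [← Real.rpow_natCast, ← Real.rpow_mul (by positivity)]
    norm_num
  have hlog := abs_sum_sawtooth_div_add_le_natLog c (Real.one_le_rpow hy (by norm_num)) hθ
    (hK.trans_eq hcube.symm)
  rw [hcube, Ico_add_one_right_eq_Icc] at hlog
  exact hlog.trans (by gcongr; exact natLog_two_two_mul_le hy hK)

end Sawtooth

section DivisibleFloors

theorem ite_dvd_floor_eq {t : ℝ} (ht : 1 ≤ t) {d : ℕ} (hd : 0 < d) :
    (if d ∣ ⌊t⌋₊ then 1 else 0 : ℝ) =
      1 / d - sawtooth (t / d) + sawtooth (t / d - 1 / d) := by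
  have hfloor : (⌊t / d⌋ : ℝ) = (⌊t⌋₊ / d : ℕ) := by
    rw [← Nat.floor_div_natCast, natCast_floor_eq_intCast_floor (by positivity)]
  have hfloor_sub : (⌊t / d - 1 / d⌋ : ℝ) = ((⌊t⌋₊ - 1) / d : ℕ) := by
    rw [← sub_div, ← Nat.floor_sub_one, ← Nat.floor_div_natCast,
      natCast_floor_eq_intCast_floor (div_nonneg (by linarith) (by positivity))]
  obtain ⟨k, hk⟩ := Nat.exists_eq_add_of_le' (Nat.one_le_floor_iff _ |>.2 ht)
  rw [sawtooth, sawtooth, Int.fract, Int.fract, hfloor, hfloor_sub, hk, Nat.add_sub_cancel,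
    Nat.succ_div]
  push_cast
  ring

theorem floor_div_natCast_pos {x : ℝ} {n : ℕ} (hn : n ∈ Icc 1 ⌊x⌋₊) : 0 < ⌊x / n⌋₊ := by
  obtain ⟨hn1, hnx⟩ := mem_Icc.1 hn
  exact Nat.floor_pos.2 ((one_le_div (by exact_mod_cast hn1)).2
    ((Nat.le_floor_iff' (by omega)).1 hnx))

theorem filter_floor_div_eq {x : ℝ} (hx : 0 ≤ x) {m : ℕ} (hm : 0 < m) :
    {n ∈ Icc 1 ⌊x⌋₊ | ⌊x / (n : ℕ)⌋₊ = m} = Ioc ⌊x / (m + 1)⌋₊ ⌊x / m⌋₊ := by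
  have hm1 : (1 : ℝ) ≤ m := by exact_mod_cast hm
  ext n
  simp only [mem_filter, mem_Icc, mem_Ioc]
  rcases Nat.eq_zero_or_pos n with rfl | hn
  · simp
  have hn0 : (0 : ℝ) < n := by exact_mod_cast hn
  rw [Nat.floor_eq_iff (by positivity), Nat.floor_lt (by positivity), Nat.le_floor_iff hx,
    Nat.le_floor_iff (by positivity), le_div_iff₀ hn0, div_lt_iff₀ hn0,
    div_lt_iff₀ (by positivity), le_div_iff₀ (by positivity), mul_comm (n : ℝ), mul_comm (n : ℝ)]
  exact ⟨fun h => h.2.symm, fun h =>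
    ⟨⟨hn, (le_mul_of_one_le_left hn0.le hm1).trans h.2⟩, h.symm⟩⟩

theorem card_filter_floor_div_eq {x : ℝ} (hx : 0 ≤ x) {m : ℕ} (hm : 0 < m) :
    (#{n ∈ Icc 1 ⌊x⌋₊ | ⌊x / (n : ℕ)⌋₊ = m} : ℝ) =
      x * (1 / (m * (m + 1))) - sawtooth (x / m) + sawtooth (x / (m + 1)) := by
  have hle : ⌊x / (m + 1)⌋₊ ≤ ⌊x / m⌋₊ := Nat.floor_le_floor (by gcongr; linarith)
  rw [filter_floor_div_eq hx hm, Nat.card_Ioc, Nat.cast_sub hle,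
    natCast_floor_eq_intCast_floor (by positivity),
    natCast_floor_eq_intCast_floor (by positivity), sawtooth, sawtooth, Int.fract, Int.fract]
  field_simp
  ring

theorem filter_dvd_floor_div_le {x : ℝ} (hx : 0 ≤ x) {d : ℕ} (hd : 0 < d) (B : ℕ) :
    {n ∈ Icc 1 ⌊x⌋₊ | d ∣ ⌊x / (n : ℕ)⌋₊ ∧ n ≤ ⌊x / d / (B + 1)⌋₊} =
      {n ∈ Icc 1 ⌊x / d / (B + 1)⌋₊ | d ∣ ⌊x / (n : ℕ)⌋₊} := by
  have hd1 : (1 : ℝ) ≤ d := by exact_mod_cast hd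
  have hle : ⌊x / d / (B + 1)⌋₊ ≤ ⌊x⌋₊ := Nat.floor_le_floor <|
    (div_le_self (by positivity) (by simp)).trans (div_le_self hx hd1)
  ext n
  simp only [mem_filter, mem_Icc]
  grind

theorem filter_dvd_floor_div_lt {x : ℝ} (hx : 0 ≤ x) {d : ℕ} (hd : 0 < d) (B : ℕ) :
    {n ∈ Icc 1 ⌊x⌋₊ | d ∣ ⌊x / (n : ℕ)⌋₊ ∧ ¬ n ≤ ⌊x / d / (B + 1)⌋₊} =
      (Icc 1 B).biUnion fun l => {n ∈ Icc 1 ⌊x⌋₊ | ⌊x / (n : ℕ)⌋₊ = d * l} := by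
  ext n
  simp only [mem_filter, mem_biUnion]
  by_cases hn : n ∈ Icc 1 ⌊x⌋₊
  swap
  · simp [hn]
  have hn0 : (0 : ℝ) < n := by exact_mod_cast (mem_Icc.1 hn).1
  have hpos := floor_div_natCast_pos hn
  have hiff : n ≤ ⌊x / d / (B + 1)⌋₊ ↔ d * (B + 1) ≤ ⌊x / (n : ℝ)⌋₊ := by
    rw [Nat.le_floor_iff (by positivity), Nat.le_floor_iff (by positivity), le_div_iff₀ hn0,
      div_div, le_div_iff₀ (by positivity), mul_comm]
    push_cast
    rfl
  simp only [hn, true_and, hiff, mem_Icc]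
  constructor
  · rintro ⟨⟨l, hl⟩, hlt⟩
    rw [hl] at hpos
    rw [hl, Nat.mul_le_mul_left_iff hd] at hlt
    exact ⟨l, ⟨Nat.pos_of_mul_pos_left hpos, by omega⟩, hl⟩
  · rintro ⟨l, ⟨-, hlB⟩, hl⟩
    rw [hl, Nat.mul_le_mul_left_iff hd]
    exact ⟨dvd_mul_right _ _, by omega⟩

theorem card_filter_dvd_floor_div_eq {x : ℝ} (hx : 0 ≤ x) {d : ℕ} (hd : 0 < d) (B : ℕ) :
    #{n ∈ Icc 1 ⌊x⌋₊ | d ∣ ⌊x / (n : ℕ)⌋₊} =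
      #{n ∈ Icc 1 ⌊x / d / (B + 1)⌋₊ | d ∣ ⌊x / (n : ℕ)⌋₊} +
        ∑ l ∈ Icc 1 B, #{n ∈ Icc 1 ⌊x⌋₊ | ⌊x / (n : ℕ)⌋₊ = d * l} := by
  rw [← card_filter_add_card_filter_not fun n => n ≤ ⌊x / d / (B + 1)⌋₊, filter_filter,
    filter_filter, filter_dvd_floor_div_le hx hd, filter_dvd_floor_div_lt hx hd, card_biUnion]
  intro l _ l' _ hne
  refine disjoint_filter.2 fun n _ hl hl' => hne ?_
  exact Nat.eq_of_mul_eq_mul_left hd (hl.symm.trans hl')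

theorem abs_card_filter_dvd_floor_div_sub_div_le {x : ℝ} {d N : ℕ} (hd : 0 < d) (hdx : d ≤ x)
    (hN : (N : ℝ) ^ 2 ≤ x / d) :
    |#{n ∈ Icc 1 N | d ∣ ⌊x / (n : ℕ)⌋₊} - (N / d : ℝ)| ≤
      5200 * (x / d) ^ (1 / 3 : ℝ) * (1 + Real.log (x / d)) := by
  have hd1 : (1 : ℝ) ≤ d := by exact_mod_cast hd
  have hy1 : 1 ≤ x / d := (one_le_div (by linarith)).2 hdx
  have hNx : (N : ℝ) ≤ x := by
    have := div_le_self (by linarith) hd1 (a := x)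
    nlinarith
  have heq : (#{n ∈ Icc 1 N | d ∣ ⌊x / (n : ℕ)⌋₊} : ℝ) = N / d -
      ∑ n ∈ Icc 1 N, sawtooth (x / d / (n + 0) + 0) +
      ∑ n ∈ Icc 1 N, sawtooth (x / d / (n + 0) + -(1 / d)) := by
    have hconst : (N / d : ℝ) = ∑ n ∈ Icc 1 N, 1 / (d : ℝ) := by simp [div_eq_mul_inv]
    rw [card_filter, hconst, ← sum_sub_distrib, ← sum_add_distrib, Nat.cast_sum]
    refine sum_congr rfl fun n hn => ?_
    obtain ⟨hn1, hnN⟩ := mem_Icc.1 hn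
    have hn0 : (0 : ℝ) < n := by exact_mod_cast hn1
    have hnx : (n : ℝ) ≤ x := le_trans (by exact_mod_cast hnN) hNx
    rw [Nat.cast_ite, Nat.cast_one, Nat.cast_zero, ite_dvd_floor_eq ((one_le_div hn0).2 hnx) hd,
      div_right_comm, add_zero, add_zero, sub_eq_add_neg _ (1 / (d : ℝ))]
  have hψ₁ := abs_le.1 (abs_sum_sawtooth_div_add_le 0 hy1 (by simp : (0 : ℝ) ∈ Set.Icc 0 1) hN)
  have hψ₂ := abs_le.1
    (abs_sum_sawtooth_div_add_le (-(1 / d)) hy1 (by simp : (0 : ℝ) ∈ Set.Icc 0 1) hN)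
  rw [heq, abs_le]
  constructor <;> linarith

theorem abs_sum_card_filter_floor_div_sub_le {x : ℝ} {d B : ℕ} (hd : 0 < d) (hdx : d ≤ x)
    (hB : (B : ℝ) ^ 2 ≤ x / d) :
    |∑ l ∈ Icc 1 B, (#{n ∈ Icc 1 ⌊x⌋₊ | ⌊x / (n : ℕ)⌋₊ = d * l} : ℝ) -
        x * ∑ l ∈ Icc 1 B, 1 / ((d * l) * (d * l + 1) : ℝ)| ≤
      5200 * (x / d) ^ (1 / 3 : ℝ) * (1 + Real.log (x / d)) := by
  have hd1 : (1 : ℝ) ≤ d := by exact_mod_cast hd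
  have hd0 : (d : ℝ) ≠ 0 := by positivity
  have hy1 : 1 ≤ x / d := (one_le_div (by linarith)).2 hdx
  have heq : ∑ l ∈ Icc 1 B, (#{n ∈ Icc 1 ⌊x⌋₊ | ⌊x / (n : ℕ)⌋₊ = d * l} : ℝ) =
      x * ∑ l ∈ Icc 1 B, 1 / ((d * l) * (d * l + 1) : ℝ) -
      ∑ l ∈ Icc 1 B, sawtooth (x / d / (l + 0) + 0) +
      ∑ l ∈ Icc 1 B, sawtooth (x / d / (l + 1 / d) + 0) := by
    rw [mul_sum, ← sum_sub_distrib, ← sum_add_distrib]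
    refine sum_congr rfl fun l hl => ?_
    rw [card_filter_floor_div_eq (by linarith) (Nat.mul_pos hd (mem_Icc.1 hl).1), add_zero,
      add_zero, add_zero, div_div, div_div, mul_add (d : ℝ), mul_one_div_cancel hd0,
      Nat.cast_mul]
  have hψ₁ := abs_le.1 (abs_sum_sawtooth_div_add_le 0 hy1 (by simp : (0 : ℝ) ∈ Set.Icc 0 1) hB)
  have hψ₂ := abs_le.1 (abs_sum_sawtooth_div_add_le 0 hy1
    (⟨by positivity, (div_le_one (by positivity)).2 hd1⟩ : 1 / (d : ℝ) ∈ Set.Icc 0 1) hB)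
  rw [heq, abs_le]
  constructor <;> linarith

theorem hasSum_one_div_add_mul_add_one {a : ℝ} (ha : 0 < a) :
    HasSum (fun l : ℕ => 1 / ((l + a) * (l + a + 1))) (1 / a) := by
  rw [hasSum_iff_tendsto_nat_of_nonneg fun l => by positivity]
  have hsum (n : ℕ) : ∑ l ∈ range n, 1 / ((l + a) * (l + a + 1)) = 1 / a - 1 / (n + a) := by
    induction n with
    | zero => simp
    | succ n ih =>
      rw [sum_range_succ, ih]
      push_cast
      field_simp
      ring
  simp only [hsum]
  simpa using (tendsto_inv_atTop_zero.comp
    (tendsto_atTop_add_const_right _ a tendsto_natCast_atTop_atTop)).const_sub a⁻¹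

/-- The limiting density, as `x → ∞`, of the integers `n ≤ x` with `d ∣ ⌊x/n⌋`. The term `m = 0`
vanishes because `1 / 0 = 0`. -/
noncomputable def dvdFloorDensity (d : ℕ) : ℝ :=
  ∑' m : ℕ, if d ∣ m then 1 / (m * (m + 1) : ℝ) else 0

theorem summable_one_div_mul_add_one : Summable fun m : ℕ => 1 / (m * (m + 1) : ℝ) :=
  (summable_nat_add_iff 1).1 <| by
    simpa [add_assoc] using (hasSum_one_div_add_mul_add_one one_pos).summable

theorem hasSum_dvdFloorDensity (d : ℕ) :
    HasSum (fun m : ℕ => if d ∣ m then 1 / (m * (m + 1) : ℝ) else 0) (dvdFloorDensity d) :=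
  (summable_one_div_mul_add_one.of_nonneg_of_le (fun m => by positivity)
    fun m => by split_ifs <;> [rfl; positivity]).hasSum

theorem hasSum_dvdFloorDensity_mul {d : ℕ} (hd : 0 < d) :
    HasSum (fun l : ℕ => 1 / ((d * l) * (d * l + 1) : ℝ)) (dvdFloorDensity d) := by
  have hzero : ∀ m ∉ Set.range (d * ·), (if d ∣ m then 1 / (m * (m + 1) : ℝ) else 0) = 0 :=
    fun m hm => if_neg fun ⟨l, hl⟩ => hm ⟨l, hl.symm⟩
  simpa [Function.comp_def] using
    ((mul_right_injective₀ hd.ne').hasSum_iff hzero).2 (hasSum_dvdFloorDensity d)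

theorem hasSum_dvdFloorDensity_tail {d : ℕ} (hd : 0 < d) (B : ℕ) :
    HasSum (fun l : ℕ => 1 / ((d * (l + (B + 1))) * (d * (l + (B + 1)) + 1) : ℝ))
      (dvdFloorDensity d - ∑ l ∈ Icc 1 B, 1 / ((d * l) * (d * l + 1) : ℝ)) := by
  have h := (hasSum_nat_add_iff' (B + 1)).2 (hasSum_dvdFloorDensity_mul hd)
  rw [range_eq_Ico, sum_eq_sum_Ico_succ_bot (by omega), zero_add,
    Ico_add_one_right_eq_Icc] at h
  simpa using h

theorem le_dvdFloorDensity_tail {d : ℕ} (hd : 0 < d) (B : ℕ) :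
    1 / ((d : ℝ) ^ 2 * (B + 1)) ≤
      dvdFloorDensity d - ∑ l ∈ Icc 1 B, 1 / ((d * l) * (d * l + 1) : ℝ) := by
  have hd1 : (1 : ℝ) ≤ d := by exact_mod_cast hd
  have htele := (hasSum_one_div_add_mul_add_one (by positivity : (0 : ℝ) < B + 1)).mul_left
    (1 / (d : ℝ) ^ 2)
  rw [one_div_mul_one_div] at htele
  refine hasSum_le (fun l => ?_) htele (hasSum_dvdFloorDensity_tail hd B)
  rw [one_div_mul_one_div]
  refine one_div_le_one_div_of_le (by positivity) ?_
  calc (d : ℝ) * (l + (B + 1)) * (d * (l + (B + 1)) + 1)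
      ≤ d * (l + (B + 1)) * (d * (l + (B + 1)) + d) := by gcongr
    _ = (d : ℝ) ^ 2 * ((l + (B + 1)) * (l + (B + 1) + 1)) := by ring

theorem dvdFloorDensity_tail_le {d B : ℕ} (hd : 0 < d) (hB : 0 < B) :
    dvdFloorDensity d - ∑ l ∈ Icc 1 B, 1 / ((d * l) * (d * l + 1) : ℝ) ≤
      1 / ((d : ℝ) ^ 2 * B) := by
  have htele := (hasSum_one_div_add_mul_add_one (by positivity : (0 : ℝ) < B)).mul_left
    (1 / (d : ℝ) ^ 2)
  rw [one_div_mul_one_div] at htele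
  refine hasSum_le (fun l => ?_) (hasSum_dvdFloorDensity_tail hd B) htele
  rw [one_div_mul_one_div]
  refine one_div_le_one_div_of_le (by positivity) ?_
  calc (d : ℝ) ^ 2 * ((l + B) * (l + B + 1))
      = d * (l + B) * (d * (l + (B + 1))) := by ring
    _ ≤ d * (l + (B + 1)) * (d * (l + (B + 1)) + 1) := by
      gcongr <;> linarith

theorem dvdFloorDensity_nonneg (d : ℕ) : 0 ≤ dvdFloorDensity d :=
  tsum_nonneg fun m => by positivity

theorem dvdFloorDensity_le {d : ℕ} (hd : 0 < d) : dvdFloorDensity d ≤ 2 / (d : ℝ) ^ 2 := by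
  have htail := dvdFloorDensity_tail_le hd one_pos
  have hfirst : 1 / ((d : ℝ) * (d + 1)) ≤ 1 / (d : ℝ) ^ 2 := by
    rw [sq]
    gcongr
    linarith
  simp only [Icc_self, sum_singleton, Nat.cast_one, mul_one] at htail
  calc dvdFloorDensity d ≤ 1 / (d : ℝ) ^ 2 + 1 / (d : ℝ) ^ 2 := by linarith
    _ = 2 / (d : ℝ) ^ 2 := by ring

theorem abs_floor_div_sub_mul_dvdFloorDensity_tail_le {x : ℝ} {d B : ℕ} (hd : 0 < d)
    (hx : 0 ≤ x) (hB : 0 < B) (hxB : x / d ≤ (B + 1 : ℝ) ^ 2) :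
    |(⌊x / d / (B + 1)⌋₊ / d : ℝ) -
      x * (dvdFloorDensity d - ∑ l ∈ Icc 1 B, 1 / ((d * l) * (d * l + 1) : ℝ))| ≤ 3 := by
  have hd1 : (1 : ℝ) ≤ d := by exact_mod_cast hd
  have hB1 : (1 : ℝ) ≤ B := by exact_mod_cast hB
  have hlow := mul_le_mul_of_nonneg_left (le_dvdFloorDensity_tail hd B) hx
  have hup := mul_le_mul_of_nonneg_left (dvdFloorDensity_tail_le hd hB) hx
  set T := x * (dvdFloorDensity d - ∑ l ∈ Icc 1 B, 1 / ((d * l) * (d * l + 1) : ℝ))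
  have hgap : x / d / B ≤ x / d / (B + 1) + 2 := by
    have hsub : x / d / B - x / d / (B + 1) = x / d / (B * (B + 1)) := by field_simp; ring
    have hle : x / d / (B * (B + 1)) ≤ 2 := by
      rw [div_le_iff₀ (by positivity)]
      nlinarith
    linarith
  have hTlow : x / d / (B + 1) / d ≤ T := le_of_eq_of_le (by field_simp) hlow
  have hTup : T ≤ x / d / B / d := hup.trans_eq (by field_simp)
  have hN := Nat.floor_le (by positivity : 0 ≤ x / d / (B + 1))
  have hN' := Nat.lt_floor_add_one (x / d / (B + 1))
  rw [abs_le]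
  constructor
  · have : (x / d / B - ⌊x / d / (B + 1)⌋₊) / d ≤ 3 :=
      (div_le_iff₀ (by positivity)).2 (by linarith)
    rw [sub_div] at this
    linarith
  · have : ((⌊x / d / (B + 1)⌋₊ : ℝ) - x / d / (B + 1)) / d ≤ 0 :=
      div_nonpos_of_nonpos_of_nonneg (by linarith) (by positivity)
    rw [sub_div] at this
    linarith

theorem abs_card_filter_dvd_floor_div_sub_le_of_le {x : ℝ} {d : ℕ} (hd : 0 < d) (hdx : d ≤ x) :
    |#{n ∈ Icc 1 ⌊x⌋₊ | d ∣ ⌊x / (n : ℕ)⌋₊} - x * dvdFloorDensity d| ≤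
      10403 * ((x / d) ^ (1 / 3 : ℝ) * (1 + Real.log (x / d))) := by
  have hd1 : (1 : ℝ) ≤ d := by exact_mod_cast hd
  have hx : 0 ≤ x := by linarith
  have hy1 : 1 ≤ x / d := (one_le_div (by linarith)).2 hdx
  set B := ⌊√(x / d)⌋₊
  have hBle : (B : ℝ) ≤ √(x / d) := Nat.floor_le (by positivity)
  have hBlt : √(x / d) < B + 1 := Nat.lt_floor_add_one _
  have hNle : (⌊x / d / (B + 1)⌋₊ : ℝ) ≤ √(x / d) := by
    refine (Nat.floor_le (by positivity)).trans ((div_le_iff₀ (by positivity)).2 ?_)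
    calc x / d = √(x / d) * √(x / d) := (Real.mul_self_sqrt (by positivity)).symm
      _ ≤ √(x / d) * (B + 1) := by gcongr
  have hsmall := abs_le.1 (abs_card_filter_dvd_floor_div_sub_div_le hd hdx
    ((Real.le_sqrt (by positivity) (by positivity)).1 hNle))
  have hlarge := abs_le.1 (abs_sum_card_filter_floor_div_sub_le hd hdx
    ((Real.le_sqrt (by positivity) (by positivity)).1 hBle))
  have htail := abs_le.1 (abs_floor_div_sub_mul_dvdFloorDensity_tail_le hd hx
    (Nat.floor_pos.2 (Real.one_le_sqrt.2 hy1)) ((Real.sqrt_le_left (by positivity)).1 hBlt.le))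
  have hone : 1 ≤ (x / d) ^ (1 / 3 : ℝ) * (1 + Real.log (x / d)) :=
    one_le_mul_of_one_le_of_one_le (Real.one_le_rpow hy1 (by norm_num))
      (by linarith [Real.log_nonneg hy1])
  rw [card_filter_dvd_floor_div_eq hx hd B, abs_le]
  push_cast at hlarge ⊢
  constructor <;> linarith

theorem card_filter_dvd_floor_div_eq_zero {x : ℝ} {d : ℕ} (hx : 0 ≤ x) (hxd : x < d) :
    #{n ∈ Icc 1 ⌊x⌋₊ | d ∣ ⌊x / (n : ℕ)⌋₊} = 0 := by
  refine card_eq_zero.2 (filter_eq_empty_iff.2 fun n hn hdvd => ?_)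
  have hn1 : (1 : ℝ) ≤ n := by exact_mod_cast (mem_Icc.1 hn).1
  have hle := (Nat.le_floor_iff (by positivity)).1
    (Nat.le_of_dvd (floor_div_natCast_pos hn) hdvd)
  linarith [div_le_self hx hn1]

theorem abs_card_filter_dvd_floor_div_sub_le {x : ℝ} {d : ℕ} (hx : 1 ≤ x) (hd : 0 < d) :
    |#{n ∈ Icc 1 ⌊x⌋₊ | d ∣ ⌊x / (n : ℕ)⌋₊} - x * dvdFloorDensity d| ≤
      10403 * ((x / d) ^ (1 / 3 : ℝ) * (1 + Real.log x)) := by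
  have hd1 : (1 : ℝ) ≤ d := by exact_mod_cast hd
  rcases le_or_gt (d : ℝ) x with hdx | hxd
  · refine (abs_card_filter_dvd_floor_div_sub_le_of_le hd hdx).trans ?_
    gcongr
    exact div_le_self (by linarith) hd1
  · have hy1 : x / d ≤ 1 := (div_le_one (by linarith)).2 hxd.le
    rw [card_filter_dvd_floor_div_eq_zero (by linarith) hxd, Nat.cast_zero, zero_sub, abs_neg,
      abs_of_nonneg (mul_nonneg (by linarith) (dvdFloorDensity_nonneg d))]
    calc x * dvdFloorDensity d ≤ x * (2 / (d : ℝ) ^ 2) := by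
          gcongr
          exact dvdFloorDensity_le hd
      _ = 2 / d * (x / d) := by ring
      _ ≤ 2 / 1 * (x / d) ^ (1 / 3 : ℝ) := by
          gcongr
          exact Real.self_le_rpow_of_le_one (by positivity) hy1 (by norm_num)
      _ ≤ 10403 * ((x / d) ^ (1 / 3 : ℝ) * (1 + Real.log x)) := by
          have hpow : 0 ≤ (x / d) ^ (1 / 3 : ℝ) := by positivity
          nlinarith [mul_nonneg hpow (Real.log_nonneg hx)]

theorem hasSum_ite_dvd {m : ℕ} (hm : m ≠ 0) (g : ℕ → ℝ) :
    HasSum (fun d => if d ∣ m then g d else 0) (∑ d ∈ m.divisors, g d) := by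
  have h : HasSum (fun d => if d ∣ m then g d else 0)
      (∑ d ∈ m.divisors, if d ∣ m then g d else 0) :=
    hasSum_sum_of_ne_finset_zero fun d hd =>
      if_neg fun hdvd => hd (Nat.mem_divisors.2 ⟨hdvd, hm⟩)
  rwa [sum_congr rfl fun d hd => if_pos (Nat.dvd_of_mem_divisors hd)] at h

theorem hasSum_mul_card_filter_dvd_floor_div (x : ℝ) (g : ℕ → ℝ) :
    HasSum (fun d => g d * #{n ∈ Icc 1 ⌊x⌋₊ | d ∣ ⌊x / (n : ℕ)⌋₊})
      (∑ n ∈ Icc 1 ⌊x⌋₊, ∑ d ∈ ⌊x / (n : ℝ)⌋₊.divisors, g d) := by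
  refine (hasSum_sum fun n hn =>
    hasSum_ite_dvd (floor_div_natCast_pos hn).ne' g).congr_fun fun d => ?_
  rw [← sum_filter, sum_const, nsmul_eq_mul, mul_comm]

theorem hasSum_mul_dvdFloorDensity {g : ℕ → ℝ}
    (hg : Summable fun d => |g d| * dvdFloorDensity d) :
    HasSum (fun d => g d * dvdFloorDensity d)
      (∑' m : ℕ, (∑ d ∈ m.divisors, g d) / (m * (m + 1))) := by
  set F : ℕ × ℕ → ℝ := fun p => g p.1 * if p.1 ∣ p.2 then 1 / (p.2 * (p.2 + 1) : ℝ) else 0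
  have hrow (d : ℕ) : HasSum (fun m => F (d, m)) (g d * dvdFloorDensity d) :=
    (hasSum_dvdFloorDensity d).mul_left (g d)
  have hcol (m : ℕ) : HasSum (fun d => F (d, m)) ((∑ d ∈ m.divisors, g d) / (m * (m + 1))) := by
    rcases eq_or_ne m 0 with rfl | hm
    · simp [F]
    · refine ((hasSum_ite_dvd hm g).div_const _).congr_fun fun d => ?_
      simp only [F]
      split_ifs <;> ring
  have hF : Summable F := by
    refine summable_abs_iff.1 ((summable_prod_of_nonneg fun p => abs_nonneg _).2
      ⟨fun d => (hrow d).summable.abs, hg.congr fun d => ?_⟩)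
    rw [← ((hasSum_dvdFloorDensity d).mul_left |g d|).tsum_eq]
    refine tsum_congr fun m => ?_
    rw [abs_mul, abs_of_nonneg (by positivity : (0:ℝ) ≤ if d ∣ m then _ else _)]
  rw [(((Equiv.prodComm ℕ ℕ).hasSum_iff.2 hF.hasSum).prod_fiberwise hcol).tsum_eq]
  exact hF.hasSum.prod_fiberwise hrow

theorem dvdFloorDensity_zero : dvdFloorDensity 0 = 0 := by
  simp [dvdFloorDensity]

theorem summable_abs_mul_dvdFloorDensity {g : ℕ → ℝ}
    (hg : Summable fun d : ℕ => |g d| / (d : ℝ) ^ (1 / 3 : ℝ)) :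
    Summable fun d => |g d| * dvdFloorDensity d := by
  refine (hg.mul_left 2).of_nonneg_of_le
    (fun d => mul_nonneg (abs_nonneg _) (dvdFloorDensity_nonneg d)) fun d => ?_
  rcases d.eq_zero_or_pos with rfl | hd
  · simp [dvdFloorDensity_zero]
  have hd1 : (1 : ℝ) ≤ d := by exact_mod_cast hd
  calc |g d| * dvdFloorDensity d ≤ |g d| * (2 / (d : ℝ) ^ (2 : ℝ)) := by
        gcongr
        simpa using dvdFloorDensity_le hd
    _ ≤ |g d| * (2 / (d : ℝ) ^ (1 / 3 : ℝ)) := by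
        gcongr
        norm_num
    _ = 2 * (|g d| / (d : ℝ) ^ (1 / 3 : ℝ)) := by ring

theorem abs_sum_sum_divisors_floor_div_sub_le {g : ℕ → ℝ}
    (hg : Summable fun d : ℕ => |g d| / (d : ℝ) ^ (1 / 3 : ℝ)) {x : ℝ} (hx : 1 ≤ x) :
    |∑ n ∈ Icc 1 ⌊x⌋₊, ∑ d ∈ ⌊x / (n : ℝ)⌋₊.divisors, g d -
        x * ∑' m : ℕ, (∑ d ∈ m.divisors, g d) / (m * (m + 1))| ≤
      10403 * (x ^ (1 / 3 : ℝ) * (1 + Real.log x)) *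
        ∑' d : ℕ, |g d| / (d : ℝ) ^ (1 / 3 : ℝ) := by
  have hx0 : 0 ≤ x := by linarith
  have hdiff := (hasSum_mul_card_filter_dvd_floor_div x g).sub
    ((hasSum_mul_dvdFloorDensity (summable_abs_mul_dvdFloorDensity hg)).mul_left x)
  refine hdiff.norm_le_of_bounded (hg.hasSum.mul_left _) fun d => ?_
  rw [mul_left_comm, ← mul_sub, Real.norm_eq_abs, abs_mul]
  rcases d.eq_zero_or_pos with rfl | hd
  · rw [filter_false_of_mem fun n hn hdvd =>
      (floor_div_natCast_pos hn).ne' (Nat.eq_zero_of_zero_dvd hdvd)]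
    simp [dvdFloorDensity_zero]
  calc _ ≤ |g d| * (10403 * ((x / d) ^ (1 / 3 : ℝ) * (1 + Real.log x))) := by
        gcongr
        exact abs_card_filter_dvd_floor_div_sub_le hx hd
    _ = _ := by
        rw [Real.div_rpow hx0 d.cast_nonneg]
        ring

theorem isBigO_sum_sum_divisors_floor_div_sub {g : ℕ → ℝ}
    (hg : Summable fun d : ℕ => |g d| / (d : ℝ) ^ (1 / 3 : ℝ)) :
    (fun x : ℝ => ∑ n ∈ Icc 1 ⌊x⌋₊, ∑ d ∈ ⌊x / (n : ℝ)⌋₊.divisors, g d -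
        x * ∑' m : ℕ, (∑ d ∈ m.divisors, g d) / (m * (m + 1)))
      =O[atTop] fun x => x ^ (1 / 3 : ℝ) * Real.log x := by
  refine .of_bound (20806 * ∑' d : ℕ, |g d| / (d : ℝ) ^ (1 / 3 : ℝ)) ?_
  filter_upwards [eventually_ge_atTop (Real.exp 1)] with x hx
  have hx1 : 1 ≤ x := (Real.one_le_exp zero_le_one).trans hx
  have hlog : 1 ≤ Real.log x := (Real.le_log_iff_exp_le (by linarith)).2 hx
  rw [Real.norm_of_nonneg (by positivity : 0 ≤ x ^ (1 / 3 : ℝ) * Real.log x)]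
  calc _ ≤ 10403 * (x ^ (1 / 3 : ℝ) * (1 + Real.log x)) *
        ∑' d : ℕ, |g d| / (d : ℝ) ^ (1 / 3 : ℝ) := abs_sum_sum_divisors_floor_div_sub_le hg hx1
    _ ≤ 10403 * (x ^ (1 / 3 : ℝ) * (2 * Real.log x)) *
        ∑' d : ℕ, |g d| / (d : ℝ) ^ (1 / 3 : ℝ) := by
      gcongr
      linarith
    _ = _ := by ring

end DivisibleFloors

theorem totient_div_eq_sum_moebius_div (m : ℕ) :
    (m.totient / m : ℝ) = ∑ d ∈ m.divisors, (ArithmeticFunction.moebius d / d : ℝ) := by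
  rcases m.eq_zero_or_pos with rfl | hm
  · simp
  have hinv := (ArithmeticFunction.sum_eq_iff_sum_mul_moebius_eq
    (f := fun n => (n.totient : ℝ)) (g := fun n => (n : ℝ))).1
    (fun n _ => by exact_mod_cast n.sum_totient) m hm
  rw [← hinv, Nat.sum_divisorsAntidiagonal
    (f := fun a b => (ArithmeticFunction.moebius a * b : ℝ)), sum_div]
  refine sum_congr rfl fun d hd => ?_
  have hd0 : (d : ℝ) ≠ 0 := by exact_mod_cast (Nat.pos_of_mem_divisors hd).ne'
  rw [Nat.cast_div (Nat.dvd_of_mem_divisors hd) hd0]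
  field_simp

theorem summable_abs_moebius_div_div_rpow {s : ℝ} (hs : 0 < s) :
    Summable fun d : ℕ => |(ArithmeticFunction.moebius d / d : ℝ)| / (d : ℝ) ^ s := by
  refine (Real.summable_one_div_nat_rpow.2 (by linarith : 1 < 1 + s)).of_nonneg_of_le
    (fun d => by positivity) fun d => ?_
  rw [Real.rpow_one_add' d.cast_nonneg (by linarith), ← div_div, abs_div, Nat.abs_cast]
  gcongr
  exact_mod_cast ArithmeticFunction.abs_moebius_le_one

/-- `∑_{n ≤ x} φ(⌊x/n⌋)/⌊x/n⌋ = x ∑_{m ≥ 1} φ(m)/(m²(m+1)) + O(x^{1/3} log x)`. -/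
theorem sum_totient_ratio_floor_div :
    (fun x : ℝ =>
        (∑ n ∈ Finset.Icc 1 ⌊x⌋₊,
          (Nat.totient ⌊x / (n : ℝ)⌋₊ : ℝ) / (⌊x / (n : ℝ)⌋₊ : ℝ)) -
        x * ∑' m : ℕ, (Nat.totient m : ℝ) / (m ^ 2 * (m + 1)))
    =O[atTop] fun x : ℝ => x ^ ((1 : ℝ) / 3) * Real.log x := by
  have hweight (m : ℕ) : (m.totient / (m ^ 2 * (m + 1)) : ℝ) =
      (∑ d ∈ m.divisors, (ArithmeticFunction.moebius d / d : ℝ)) / (m * (m + 1)) := by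
    rw [← totient_div_eq_sum_moebius_div, div_div, ← mul_assoc, sq]
  simp only [hweight, totient_div_eq_sum_moebius_div]
  exact isBigO_sum_sum_divisors_floor_div_sub
    (summable_abs_moebius_div_div_rpow (by norm_num))
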